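/- arXiv:math/0703792 — 2 statements merged into one kernel-verified Lean document; each statement's English description precedes it below -/
import Mathlib

section
/- Let k ≥ 1 be an integer and let A, B ∈ E(3,ℕ) be such that A · B = M_k and neither A nor B is a unit of E(3,ℕ). Then either A = M̃_k and B = M̃_1, or A = M̃_k · P and B = P · M̃_1. In other words, the decomposition M_k = M̃_k · M̃_1 into non-units of E(3,ℕ) is unique up to insertion of units. -/
/-!
Every `M ∈ E(3,ℕ)` with rows `r₁, r₂, r₃` satisfies `r₁ - r₂ + r₃ = δ (1,-1,1)` with `δ = ±1`
(`E3N_data`), since `(1,-1,1)` spans the kernel of `E` and `M` preserves the form `E` up to sign.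

Let `A * B = M_k`. The first column of `M_k` is `e₃`, so, the entries being nonnegative and `A`
having no zero column, the first column of `B` is a basis vector `e_j` and column `j` of `A` is `e₃`.
For `j = 1` and `j = 3` the row relations for `A` and `B` and the first and last rows of `M_k` force
one of the factors to be `1` or `P`, hence a unit (`one_isUnitOf`, `Pmat_isUnitOf`). For `j = 2` they
leave exactly the two factorizations `M̃_k * M̃_1` and `(M̃_k * P) * (P * M̃_1)`.
-/

open Matrix

/-- The matrix E from the paper. -/
def Emat : Matrix (Fin 3) (Fin 3) ℤ := !![0, 1, 1; -1, 0, 1; -1, -1, 0]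

/-- The monoid E(3,ℕ). -/
def E3N : Set (Matrix (Fin 3) (Fin 3) ℤ) :=
  {M | (∀ i j, 0 ≤ M i j) ∧
    (M * Emat * Mᵀ = Emat ∨ M * Emat * Mᵀ = -Emat) ∧
    (M.det = 1 ∨ M.det = -1)}

/-- The permutation matrix P. -/
def Pmat : Matrix (Fin 3) (Fin 3) ℤ := !![0, 0, 1; 0, 1, 0; 1, 0, 0]

/-- U is a unit of the (multiplicative) monoid given by the set S. -/
def IsUnitOf (S : Set (Matrix (Fin 3) (Fin 3) ℤ)) (U : Matrix (Fin 3) (Fin 3) ℤ) : Prop :=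
  U ∈ S ∧ ∀ A ∈ S, (∃ B ∈ S, A = B * U) ∧ (∃ C ∈ S, A = U * C)

/-- The matrix M_k. -/
def Mk (k : ℤ) : Matrix (Fin 3) (Fin 3) ℤ := !![0, k, k - 1; 0, k + 1, k; 1, 0, 2]

/-- The matrix M̃_k. -/
def Mtk (k : ℤ) : Matrix (Fin 3) (Fin 3) ℤ := !![k - 1, 0, k; k, 0, k + 1; 0, 1, 0]

lemma E3N_mul {M N : Matrix (Fin 3) (Fin 3) ℤ} (hM : M ∈ E3N) (hN : N ∈ E3N) : M * N ∈ E3N := by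
  obtain ⟨hM0, hM1, hM2⟩ := hM
  obtain ⟨hN0, hN1, hN2⟩ := hN
  refine ⟨fun i j => ?_, ?_, ?_⟩
  · rw [Matrix.mul_apply]
    exact Finset.sum_nonneg fun l _ => mul_nonneg (hM0 i l) (hN0 l j)
  · have h : M * N * Emat * (M * N)ᵀ = M * (N * Emat * Nᵀ) * Mᵀ := by
      rw [Matrix.transpose_mul]; simp only [Matrix.mul_assoc]
    rw [h]
    rcases hN1 with h1 | h1 <;> rcases hM1 with h2 | h2 <;> rw [h1] <;> simp [h2]
  · rw [Matrix.det_mul]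
    rcases hN2 with h1 | h1 <;> rcases hM2 with h2 | h2 <;> rw [h1, h2] <;> simp

lemma one_mem_E3N : (1 : Matrix (Fin 3) (Fin 3) ℤ) ∈ E3N := by
  refine ⟨fun i j => by fin_cases i <;> fin_cases j <;> simp, Or.inl (by simp), Or.inl (by simp)⟩

lemma Pmat_mem_E3N : Pmat ∈ E3N := by
  refine ⟨fun i j => by fin_cases i <;> fin_cases j <;> simp [Pmat],
    Or.inr (by decide), Or.inr (by decide)⟩

lemma Pmat_mul_self : Pmat * Pmat = 1 := by decide

lemma one_isUnitOf : IsUnitOf E3N 1 :=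
  ⟨one_mem_E3N, fun A hA => ⟨⟨A, hA, by simp⟩, ⟨A, hA, by simp⟩⟩⟩

lemma Pmat_isUnitOf : IsUnitOf E3N Pmat :=
  ⟨Pmat_mem_E3N, fun A hA =>
    ⟨⟨A * Pmat, E3N_mul hA Pmat_mem_E3N, by rw [Matrix.mul_assoc, Pmat_mul_self, Matrix.mul_one]⟩,
     ⟨Pmat * A, E3N_mul Pmat_mem_E3N hA, by
      rw [← Matrix.mul_assoc, Pmat_mul_self, Matrix.one_mul]⟩⟩⟩

/-- The entrywise content of membership in `E(3,ℕ)`: besides the form and determinant conditions,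
the alternating sum of the rows is `δ (1,-1,1)` with `δ = ±1`. -/
lemma E3N_data {M : Matrix (Fin 3) (Fin 3) ℤ} (hM : M ∈ E3N) :
    ∃ a b c d e f g h i : ℤ, M = !![a, b, c; d, e, f; g, h, i] ∧
      (0 ≤ a ∧ 0 ≤ b ∧ 0 ≤ c ∧ 0 ≤ d ∧ 0 ≤ e ∧ 0 ≤ f ∧ 0 ≤ g ∧ 0 ≤ h ∧ 0 ≤ i) ∧
      (∃ δ : ℤ, (δ = 1 ∨ δ = -1) ∧ a - d + g = δ ∧ b - e + h = -δ ∧ c - f + i = δ) ∧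
      (∃ ε : ℤ, (ε = 1 ∨ ε = -1) ∧ a * (h + i) + b * (i - g) - c * (g + h) = ε) ∧
      (∃ η : ℤ, (η = 1 ∨ η = -1) ∧
        a * (e * i - f * h) - b * (d * i - f * g) + c * (d * h - e * g) = η) := by
  obtain ⟨h0, h1, h2⟩ := hM
  obtain ⟨a, b, c, d, e, f, g, h, i, rfl⟩ : ∃ a b c d e f g h i : ℤ,
      M = !![a, b, c; d, e, f; g, h, i] := ⟨_, _, _, _, _, _, _, _, _, Matrix.eta_fin_three M⟩
  have hform : ∃ ε : ℤ, (ε = 1 ∨ ε = -1) ∧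
      !![a, b, c; d, e, f; g, h, i] * Emat * !![a, b, c; d, e, f; g, h, i]ᵀ = ε • Emat := by
    rcases h1 with h1 | h1
    · exact ⟨1, Or.inl rfl, by rw [h1, one_smul]⟩
    · exact ⟨-1, Or.inr rfl, by rw [h1, neg_smul, one_smul]⟩
  have hdet : ∃ η : ℤ, (η = 1 ∨ η = -1) ∧
      a * (e * i - f * h) - b * (d * i - f * g) + c * (d * h - e * g) = η := by
    have hd : (!![a, b, c; d, e, f; g, h, i]).det =
        a * (e * i - f * h) - b * (d * i - f * g) + c * (d * h - e * g) := by
      rw [Matrix.det_fin_three]; simp; ring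
    exact ⟨_, h2, hd.symm⟩
  obtain ⟨ε, hε, hf⟩ := hform
  have f12 := congrFun (congrFun hf 0) 1
  have f13 := congrFun (congrFun hf 0) 2
  have f23 := congrFun (congrFun hf 1) 2
  simp [Emat, Matrix.mul_apply, Fin.sum_univ_three] at f12 f13 f23
  refine ⟨a, b, c, d, e, f, g, h, i, rfl,
    ⟨h0 0 0, h0 0 1, h0 0 2, h0 1 0, h0 1 1, h0 1 2, h0 2 0, h0 2 1, h0 2 2⟩, ?_,
    ⟨ε, hε, by linarith⟩, hdet⟩
  -- With `w` the alternating sum of the rows, `M (E w) = 0`, so `E w = 0` as `det M ≠ 0`.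
  have hker : ![(b - e + h) + (c - f + i), -(a - d + g) + (c - f + i),
      -(a - d + g) - (b - e + h)] = (0 : Fin 3 → ℤ) := by
    apply Matrix.eq_zero_of_mulVec_eq_zero (M := !![a, b, c; d, e, f; g, h, i])
    · rcases h2 with h2 | h2 <;> rw [h2] <;> norm_num
    · ext j
      fin_cases j <;> simp [Matrix.mulVec, dotProduct, Fin.sum_univ_three] <;> linarith
  have k0 := congrFun hker 0
  have k1 := congrFun hker 1
  have k2 := congrFun hker 2
  simp at k0 k1 k2
  refine ⟨a - d + g, ?_, rfl, by linarith, by linarith⟩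
  obtain ⟨η, hη, hd⟩ := hdet
  -- Replacing the last row by `w` shows that the scalar `δ` divides the determinant.
  have hdvd : (a - d + g) * ((b * f - c * e) + (a * f - c * d) + (a * e - b * d)) = η := by
    have hh : h = -(a - d + g) - b + e := by linarith
    have hi : i = (a - d + g) - c + f := by linarith
    rw [← hd, hh, hi]; ring
  rcases hη with rfl | rfl
  · exact Int.eq_one_or_neg_one_of_mul_eq_one hdvd
  · have : (a - d + g) * -((b * f - c * e) + (a * f - c * d) + (a * e - b * d)) = 1 := by
      linarith
    exact Int.eq_one_or_neg_one_of_mul_eq_one this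

/-- If `x₁ y₁ + x₂ y₂ + x₃ y₃ = 1` with nonnegative entries, one term is nonzero and its
factors are `1`. -/
lemma sum_mul_eq_one {x₁ x₂ x₃ y₁ y₂ y₃ : ℤ} (hx₁ : 0 ≤ x₁) (hx₂ : 0 ≤ x₂) (hx₃ : 0 ≤ x₃)
    (hy₁ : 0 ≤ y₁) (hy₂ : 0 ≤ y₂) (hy₃ : 0 ≤ y₃) (h : x₁ * y₁ + x₂ * y₂ + x₃ * y₃ = 1) :
    (x₁ = 1 ∧ y₁ = 1 ∧ x₂ * y₂ = 0 ∧ x₃ * y₃ = 0) ∨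
    (x₂ = 1 ∧ y₂ = 1 ∧ x₁ * y₁ = 0 ∧ x₃ * y₃ = 0) ∨
    (x₃ = 1 ∧ y₃ = 1 ∧ x₁ * y₁ = 0 ∧ x₂ * y₂ = 0) := by
  have h1 := mul_nonneg hx₁ hy₁
  have h2 := mul_nonneg hx₂ hy₂
  have h3 := mul_nonneg hx₃ hy₃
  have key : ∀ x y : ℤ, 0 ≤ x → x * y = 1 → x = 1 ∧ y = 1 := by
    intro x y hx hxy
    rcases Int.eq_one_or_neg_one_of_mul_eq_one' hxy with h | h
    · exact h
    · omega
  have hc : x₁ * y₁ = 1 ∨ x₂ * y₂ = 1 ∨ x₃ * y₃ = 1 := by omega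
  rcases hc with h4 | h4 | h4
  · obtain ⟨p, q⟩ := key _ _ hx₁ h4
    exact Or.inl ⟨p, q, by linarith, by linarith⟩
  · obtain ⟨p, q⟩ := key _ _ hx₂ h4
    exact Or.inr (Or.inl ⟨p, q, by linarith, by linarith⟩)
  · obtain ⟨p, q⟩ := key _ _ hx₃ h4
    exact Or.inr (Or.inr ⟨p, q, by linarith, by linarith⟩)

lemma sum_mul_eq_zero {x₁ x₂ x₃ y₁ y₂ y₃ : ℤ} (hx₁ : 0 ≤ x₁) (hx₂ : 0 ≤ x₂) (hx₃ : 0 ≤ x₃)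
    (hy₁ : 0 ≤ y₁) (hy₂ : 0 ≤ y₂) (hy₃ : 0 ≤ y₃) (h : x₁ * y₁ + x₂ * y₂ + x₃ * y₃ = 0) :
    x₁ * y₁ = 0 ∧ x₂ * y₂ = 0 ∧ x₃ * y₃ = 0 := by
  have h1 := mul_nonneg hx₁ hy₁
  have h2 := mul_nonneg hx₂ hy₂
  have h3 := mul_nonneg hx₃ hy₃
  refine ⟨?_, ?_, ?_⟩ <;> linarith

/-- A scalar `t` annihilating a column `(x, y, z)` of a matrix of determinant `η = ±1` is zero;
`x p + y q + z r` is the expansion of the determinant along that column. -/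
lemma eq_zero_of_col {x y z t p q r η : ℤ} (hη : η = 1 ∨ η = -1)
    (hd : x * p + y * q + z * r = η) (h1 : x * t = 0) (h2 : y * t = 0) (h3 : z * t = 0) :
    t = 0 := by
  have : η * t = 0 := by
    rw [← hd]; linear_combination p * h1 + q * h2 + r * h3
  rcases hη with rfl | rfl <;> linarith

/-- The decomposition M_k = M̃_k · M̃_1 into non-units of E(3,ℕ) is unique up
to insertion of units. -/
theorem Mk_unique_decomposition (k : ℤ) (hk : 1 ≤ k) (A B : Matrix (Fin 3) (Fin 3) ℤ)
    (hA : A ∈ E3N) (hB : B ∈ E3N) (hAB : A * B = Mk k)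
    (hAnu : ¬ IsUnitOf E3N A) (hBnu : ¬ IsUnitOf E3N B) :
    (A = Mtk k ∧ B = Mtk 1) ∨ (A = Mtk k * Pmat ∧ B = Pmat * Mtk 1) := by
  have hA1 : A ≠ 1 := fun h => hAnu (h ▸ one_isUnitOf)
  have hAP : A ≠ Pmat := fun h => hAnu (h ▸ Pmat_isUnitOf)
  have hB1 : B ≠ 1 := fun h => hBnu (h ▸ one_isUnitOf)
  have hBP : B ≠ Pmat := fun h => hBnu (h ▸ Pmat_isUnitOf)
  obtain ⟨a, b, c, d, e, f, g, h, i, rfl, ⟨ha, hb, hc, hd, he, hf, hg, hh, hi⟩,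
    ⟨δ, hδ, r1, r2, r3⟩, ⟨ε, hε, w⟩, ⟨η, hη, dt⟩⟩ := E3N_data hA
  obtain ⟨a', b', c', d', e', f', g', h', i', rfl, ⟨ha', hb', hc', hd', he', hf', hg', hh', hi'⟩,
    ⟨δ', hδ', r1', r2', r3'⟩, ⟨ε', hε', w'⟩, ⟨η', hη', dt'⟩⟩ := E3N_data hB
  clear hA hB hAnu hBnu
  have m11 := congrFun (congrFun hAB 0) 0
  have m12 := congrFun (congrFun hAB 0) 1
  have m13 := congrFun (congrFun hAB 0) 2
  have m21 := congrFun (congrFun hAB 1) 0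
  have m31 := congrFun (congrFun hAB 2) 0
  have m32 := congrFun (congrFun hAB 2) 1
  have m33 := congrFun (congrFun hAB 2) 2
  simp [Mk, Matrix.mul_apply, Fin.sum_univ_three] at m11 m12 m13 m21 m31 m32 m33
  have hPt : Mtk k * Pmat = !![k, 0, k - 1; k + 1, 0, k; 0, 1, 0] := by
    ext x y; fin_cases x <;> fin_cases y <;> simp [Mtk, Pmat, Matrix.mul_apply, Fin.sum_univ_three]
  have hPt' : Pmat * Mtk 1 = !![0, 1, 0; 1, 0, 2; 0, 0, 1] := by
    ext x y; fin_cases x <;> fin_cases y <;> simp [Mtk, Pmat, Matrix.mul_apply, Fin.sum_univ_three]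
  have hone : (1 : Matrix (Fin 3) (Fin 3) ℤ) = !![1, 0, 0; 0, 1, 0; 0, 0, 1] := by decide
  obtain ⟨z1, z2, z3⟩ := sum_mul_eq_zero ha hb hc ha' hd' hg' m11
  obtain ⟨y1, y2, y3⟩ := sum_mul_eq_zero hd he hf ha' hd' hg' m21
  obtain ⟨x1, x2, x3⟩ := sum_mul_eq_zero hg hh hi hb' he' hh' m32
  -- The expansions of `det A` along its three columns.
  have c1 : a * (e * i - f * h) + d * (c * h - b * i) + g * (b * f - c * e) = η := by
    rw [← dt]; ring
  have c2 : b * (f * g - d * i) + e * (a * i - c * g) + h * (c * d - a * f) = η := by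
    rw [← dt]; ring
  have c3 : c * (d * h - e * g) + f * (b * g - a * h) + i * (a * e - b * d) = η := by
    rw [← dt]; ring
  rw [hone] at hA1 hB1
  rw [hPt, hPt']
  rcases sum_mul_eq_one hg hh hi ha' hd' hg' m31 with
    ⟨rfl, rfl, q1, q2⟩ | ⟨rfl, rfl, q1, q2⟩ | ⟨rfl, rfl, q1, q2⟩
  · obtain rfl := eq_zero_of_col hη c2 z2 y2 q1
    obtain rfl := eq_zero_of_col hη c3 z3 y3 q2
    obtain rfl : a = 0 := by linarith
    obtain rfl : d = 0 := by linarith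
    obtain rfl : b' = 0 := by linarith
    obtain rfl : δ = 1 := by linarith
    obtain rfl : δ' = 1 := by linarith
    obtain rfl : h = 0 := by
      rcases mul_eq_zero.mp x2 with h0 | h0
      · exact h0
      · omega
    rcases mul_eq_zero.mp x3 with rfl | rfl
    · obtain rfl : c = 1 := by rcases hε with rfl | rfl <;> linarith
      obtain rfl : b = 0 := by rcases hε with rfl | rfl <;> linarith
      obtain rfl : e = 1 := by linarith
      obtain rfl : f = 0 := by linarith
      exact absurd rfl hAP
    · obtain rfl : e' = 1 := by linarith
      obtain rfl : i' = 1 := by rcases hη' with rfl | rfl <;> linarith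
      obtain rfl : f' = c' := by linarith
      obtain rfl : b = k := by linarith
      -- The entry `k f' + c = k - 1` of the product, with `c ≥ 0`, forces `f' = 0`.
      obtain rfl : f' = 0 := by
        by_contra hne
        have : 1 ≤ f' := by omega
        nlinarith
      exact absurd rfl hB1
  · obtain rfl := eq_zero_of_col hη c1 z1 y1 q1
    obtain rfl := eq_zero_of_col hη c3 z3 y3 q2
    obtain rfl : b = 0 := by linarith
    obtain rfl : e = 0 := by linarith
    obtain rfl : e' = 0 := by linarith
    obtain rfl : δ = -1 := by linarith
    obtain rfl : δ' = -1 := by linarith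
    have hbh : (b' = 1 ∧ h' = 0) ∨ (b' = 0 ∧ h' = 1) := by omega
    rcases hbh with ⟨rfl, rfl⟩ | ⟨rfl, rfl⟩
    · right
      obtain rfl : g = 0 := by linarith
      obtain rfl : i' = 1 := by rcases hη' with rfl | rfl <;> linarith
      obtain rfl : c' = 0 := by linarith
      obtain rfl : f' = 2 := by linarith
      obtain rfl : i = 0 := by linarith
      obtain rfl : a = k := by linarith
      obtain rfl : c = a - 1 := by linarith
      obtain rfl : d = a + 1 := by linarith
      obtain rfl : f = a := by linarith
      exact ⟨rfl, rfl⟩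
    · left
      obtain rfl : i = 0 := by linarith
      obtain rfl : c' = 1 := by rcases hη' with rfl | rfl <;> linarith
      obtain rfl : i' = 0 := by linarith
      obtain rfl : f' = 2 := by linarith
      obtain rfl : g = 0 := by linarith
      obtain rfl : c = k := by linarith
      obtain rfl : a = c - 1 := by linarith
      obtain rfl : d = c := by linarith
      obtain rfl : f = d + 1 := by linarith
      exact ⟨rfl, by simp [Mtk]⟩
  · obtain rfl := eq_zero_of_col hη c1 z1 y1 q1
    obtain rfl := eq_zero_of_col hη c2 z2 y2 q2
    obtain rfl : c = 0 := by linarith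
    obtain rfl : f = 0 := by linarith
    obtain rfl : h' = 0 := by linarith
    obtain rfl : δ = 1 := by linarith
    obtain rfl : δ' = 1 := by linarith
    obtain rfl : h = 0 := by
      rcases mul_eq_zero.mp x2 with h0 | h0
      · exact h0
      · omega
    rcases mul_eq_zero.mp x1 with rfl | rfl
    · obtain rfl : a = 1 := by rcases hε with rfl | rfl <;> linarith
      obtain rfl : b = 0 := by rcases hε with rfl | rfl <;> linarith
      obtain rfl : e = 1 := by linarith
      obtain rfl : d = 0 := by linarith
      exact absurd rfl hA1
    · obtain rfl : e' = 1 := by linarith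
      obtain rfl : c' = 1 := by rcases hη' with rfl | rfl <;> linarith
      obtain rfl : i' = f' := by linarith
      obtain rfl : b = k := by linarith
      -- The entry `a + k i' = k - 1` of the product, with `a ≥ 0`, forces `i' = 0`.
      obtain rfl : i' = 0 := by
        by_contra hne
        have : 1 ≤ i' := by omega
        nlinarith
      exact absurd rfl hBP
end

section
/- The monoid Φ_3iet of 3iet preserving morphisms is not finitely generated: there is no finite set S ⊆ Φ_3iet such that every 3iet preserving morphism is a composition of finitely many elements of S. -/
/-!
For `t ≥ 1` the morphism `theta t : A ↦ AC, B ↦ B^{t+1} C, C ↦ B^t C` is 3iet preserving, and it is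
almost irreducible: every factorization of it into 3iet preserving morphisms has a factor with a
letter image of length at least `t + 2` (`long_factor`). Since a finite set of morphisms has letter
images of bounded length, no finite set generates all the `theta t`.

*`theta t` is 3iet preserving* (`theta_preserves`). The exchange with parameters `(α, β, γ)` is
induced by the one with parameters `(α, tγ + (t+1)β, α + β + γ)` on the interval of length
`α + β + γ` beginning at `0`, and the return words are the letter images of `theta t`
(`theta_path_left`, `theta_path_right`, `image_coding`).

*A linear constraint on 3iet preserving morphisms* (`compat_of_preserves`). Replacing `A, B, C` by
`0, 01, 1`, let `zer` and `one` count the resulting `0`s and `1`s. For a 3iet preserving `g`, the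
pair (`zer`, `one`) of `g B` is the sum of the pairs of `g A` and `g C`. Indeed, with `a = α + β` and
`c = β + γ`, the orbit point of a 3iet word is displaced by `c * zer - a * one` along a factor, and
stays bounded. Applying this to the images of 3iet words beginning with `(AC)^K B^K` and
`(AAC)^K (AB)^K`, with `K` large, forces the contents of `g(AC)` and `g(B)`, and those of `g(AAC)`
and `g(AB)`, to be parallel integer vectors. If the constraint failed, the contents of all three
letter images would be parallel, and the orbit of every image word would drift in one direction.

*Irreducibility* (`theta_irreducible`). Let `theta t = f ∘ g` with `g` subject to this constraint.
Either `g A` is one letter `x` with `f x = AC`; then `x` does not occur in `g B` and `g C`, and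
counting the occurrences of `C` shows that `g B` is a single letter, so that `f` has a letter image
of length `t + 2`. Or `g A = xy` with `f x = A`, `f y = C`; then counting the `B`s in `theta t B` and
`theta t C` shows that `f` maps the third letter to a letter as well.
-/

/-- The three-letter alphabet {A, B, C}. -/
inductive Letter : Type
  | A | B | C
  deriving DecidableEq

/-- Left-closed 3-interval exchange transformation with parameters (α, β, γ),
defined piecewise on the domain [0, α+β+γ) (and extended by the same formulas
elsewhere). -/
noncomputable def Tleft (α β γ : ℝ) (x : ℝ) : ℝ :=
  if x < α then x + β + γ else if x < α + β then x - α + γ else x - α - β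

/-- The inverse of `Tleft` on its domain. -/
noncomputable def TleftInv (α β γ : ℝ) (x : ℝ) : ℝ :=
  if x < γ then x + α + β else if x < β + γ then x + α - γ else x - β - γ

/-- Right-closed 3-interval exchange transformation with parameters (α, β, γ),
defined piecewise on the domain (0, α+β+γ]. -/
noncomputable def Tright (α β γ : ℝ) (x : ℝ) : ℝ :=
  if x ≤ α then x + β + γ else if x ≤ α + β then x - α + γ else x - α - β

/-- The inverse of `Tright` on its domain. -/
noncomputable def TrightInv (α β γ : ℝ) (x : ℝ) : ℝ :=
  if x ≤ γ then x + α + β else if x ≤ β + γ then x + α - γ else x - β - γ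

/-- ℤ-indexed iteration: nonnegative powers use `f`, negative powers use the
inverse map `g`. -/
noncomputable def zIter (f g : ℝ → ℝ) : ℤ → ℝ → ℝ
  | Int.ofNat n => f^[n]
  | Int.negSucc n => g^[n + 1]

/-- The letter coding of a point, left-closed convention:
A on [0,α), B on [α,α+β), C on [α+β,α+β+γ). -/
noncomputable def codeLeft (α β : ℝ) (x : ℝ) : Letter :=
  if x < α then Letter.A else if x < α + β then Letter.B else Letter.C

/-- The letter coding of a point, right-closed convention:
A on (0,α], B on (α,α+β], C on (α+β,α+β+γ]. -/
noncomputable def codeRight (α β : ℝ) (x : ℝ) : Letter :=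
  if x ≤ α then Letter.A else if x ≤ α + β then Letter.B else Letter.C

/-- The biinfinite word coding the orbit of x₀ under the left-closed
3-interval exchange transformation with parameters (α, β, γ). -/
noncomputable def uLeft (α β γ x₀ : ℝ) (n : ℤ) : Letter :=
  codeLeft α β (zIter (Tleft α β γ) (TleftInv α β γ) n x₀)

/-- The biinfinite word coding the orbit of x₀ under the right-closed
3-interval exchange transformation with parameters (α, β, γ). -/
noncomputable def uRight (α β γ x₀ : ℝ) (n : ℤ) : Letter :=
  codeRight α β (zIter (Tright α β γ) (TrightInv α β γ) n x₀)

/-- A biinfinite word over {A,B,C} is a 3iet word if it codes the orbit of a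
point under a 3-interval exchange transformation (in either convention) whose
parameters α, β, γ > 0 satisfy: α+β and β+γ are linearly independent over ℚ. -/
def Is3ietWord (u : ℤ → Letter) : Prop :=
  ∃ α β γ x₀ : ℝ, 0 < α ∧ 0 < β ∧ 0 < γ ∧
    LinearIndependent ℚ ![α + β, β + γ] ∧
    ((x₀ ∈ Set.Ico (0 : ℝ) (α + β + γ) ∧ u = uLeft α β γ x₀) ∨
     (x₀ ∈ Set.Ioc (0 : ℝ) (α + β + γ) ∧ u = uRight α β γ x₀))

/-- A morphism over the alphabet {A,B,C}, determined by the images of the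
three letters (as an endomorphism of the free monoid {A,B,C}*). -/
abbrev Morph := Letter → List Letter

/-- `IsImageWord φ u v` says that v is the biinfinite word
···φ(u₋₂)φ(u₋₁)φ(u₀)φ(u₁)···, in which the block φ(u₀) starts at position 0:
`c m` is the position at which the block φ(u_m) starts. -/
def IsImageWord (φ : Morph) (u v : ℤ → Letter) : Prop :=
  ∃ c : ℤ → ℤ, c 0 = 0 ∧ (∀ m : ℤ, c (m + 1) = c m + (φ (u m)).length) ∧
    ∀ (m : ℤ) (i : ℕ) (h : i < (φ (u m)).length),
      v (c m + (i : ℤ)) = (φ (u m)).get ⟨i, h⟩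

/-- A morphism is 3iet preserving if its letter images are nonempty (so that
it acts on biinfinite words) and it maps every 3iet word to a 3iet word. -/
def Preserves3iet (φ : Morph) : Prop :=
  (∀ a, φ a ≠ []) ∧
  ∀ u v : ℤ → Letter, Is3ietWord u → IsImageWord φ u v → Is3ietWord v

/-- Composition of morphisms: `compM φ ψ` is the morphism φ ∘ ψ,
sending a letter a to the image under φ of the word ψ(a). -/
def compM (φ ψ : Morph) : Morph := fun a => ((ψ a).map φ).flatten

/-- The identity morphism. -/
def idM : Morph := fun a => [a]

/-! ### Counting letters -/

/-- Number of `0`s in the binary word obtained by `A ↦ 0`, `B ↦ 01`, `C ↦ 1`. -/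
def zer (l : List Letter) : ℕ := l.count Letter.A + l.count Letter.B

/-- Number of `1`s in the binary word obtained by `A ↦ 0`, `B ↦ 01`, `C ↦ 1`. -/
def one (l : List Letter) : ℕ := l.count Letter.B + l.count Letter.C

/-- The image of `B` has the same binary content as the images of `A` and `C` together, so that
the morphism acts linearly on the pair (`zer`, `one`). -/
def Compat (g : Morph) : Prop :=
  zer (g Letter.B) = zer (g Letter.A) + zer (g Letter.C) ∧
  one (g Letter.B) = one (g Letter.A) + one (g Letter.C)

lemma length_eq_counts (l : List Letter) :
    l.length = l.count Letter.A + l.count Letter.B + l.count Letter.C := by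
  induction l with
  | nil => simp
  | cons a l ih => cases a <;> simp [ih] <;> omega

lemma count_image (f : Morph) (c : Letter) (l : List Letter) :
    ((l.map f).flatten).count c =
      l.count Letter.A * (f Letter.A).count c + l.count Letter.B * (f Letter.B).count c
        + l.count Letter.C * (f Letter.C).count c := by
  induction l with
  | nil => simp
  | cons a l ih =>
    cases a <;> simp [ih] <;> ring

lemma compat_comp {f g : Morph} (hf : Compat f) (hg : Compat g) : Compat (compM f g) := by
  obtain ⟨hf0, hf1⟩ := hf
  obtain ⟨hg0, hg1⟩ := hg
  unfold Compat compM
  simp only [zer, one, count_image] at *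
  constructor
  · grind
  · grind

lemma compat_id : Compat idM := by
  simp [Compat, idM, zer, one]

lemma compat_prod (L : List Morph) (hL : ∀ ψ ∈ L, Compat ψ) : Compat (L.foldr compM idM) := by
  induction L with
  | nil => exact compat_id
  | cons φ L ih =>
    exact compat_comp (hL φ (by simp)) (ih fun ψ h => hL ψ (by simp [h]))

/-! ### The morphisms `theta t` and their irreducibility -/

/-- The morphism `A ↦ AC`, `B ↦ B^{t+1} C`, `C ↦ B^t C`. -/
def theta (t : ℕ) : Morph
  | Letter.A => [Letter.A, Letter.C]
  | Letter.B => List.replicate (t + 1) Letter.B ++ [Letter.C]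
  | Letter.C => List.replicate t Letter.B ++ [Letter.C]

lemma exists_third {x y : Letter} (h : x ≠ y) : ∃ z, z ≠ x ∧ z ≠ y := by
  cases x <;> cases y <;>
    first
      | exact absurd rfl h
      | exact ⟨Letter.A, by decide, by decide⟩
      | exact ⟨Letter.B, by decide, by decide⟩
      | exact ⟨Letter.C, by decide, by decide⟩

lemma sum_letters {x y z : Letter} (h : x ≠ y) (hx : z ≠ x) (hy : z ≠ y) (F : Letter → ℕ) :
    F Letter.A + F Letter.B + F Letter.C = F x + F y + F z := by
  cases x <;> cases y <;> cases z <;> first | contradiction | ring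

lemma forall_letters {x y z : Letter} (h : x ≠ y) (hx : z ≠ x) (hy : z ≠ y) (a : Letter) :
    a = x ∨ a = y ∨ a = z := by
  cases x <;> cases y <;> cases z <;> first | contradiction | (cases a <;> simp)

/-- In any factorization `theta t = f ∘ g` with `g` compatible, either `f` maps letters to letters
or `g` maps `B` to a letter. -/
lemma theta_irreducible {t : ℕ} (ht : 1 ≤ t) {f g : Morph} (hf : ∀ a, f a ≠ [])
    (hg : Compat g) (h : ∀ a, ((g a).map f).flatten = theta t a) :
    (∀ a, (f a).length = 1) ∨ ∃ b, g Letter.B = [b] := by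
  have hcount : ∀ c a, (g a).count Letter.A * (f Letter.A).count c
      + (g a).count Letter.B * (f Letter.B).count c
      + (g a).count Letter.C * (f Letter.C).count c = (theta t a).count c := by
    intro c a
    rw [← h a, count_image]
  have tBA : (theta t Letter.B).count Letter.A = 0 := by simp [theta, List.count_replicate]
  have tBB : (theta t Letter.B).count Letter.B = t + 1 := by simp [theta]
  have tBC : (theta t Letter.B).count Letter.C = 1 := by simp [theta, List.count_replicate]
  have tCA : (theta t Letter.C).count Letter.A = 0 := by simp [theta, List.count_replicate]
  have tCB : (theta t Letter.C).count Letter.B = t := by simp [theta]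
  have tCC : (theta t Letter.C).count Letter.C = 1 := by simp [theta, List.count_replicate]
  have hA := h Letter.A
  rcases hgA : g Letter.A with _ | ⟨x, l⟩
  · rw [hgA] at hA; simp [theta] at hA
  rw [hgA] at hA
  simp only [theta, List.map_cons, List.flatten_cons] at hA
  rcases hfx : f x with _ | ⟨p, r⟩
  · exact absurd hfx (hf x)
  rw [hfx] at hA
  simp only [List.cons_append, List.cons.injEq] at hA
  obtain ⟨rfl, hA⟩ := hA
  rcases l with _ | ⟨y, l⟩
  · -- `g A = x` and `f x = AC`, so that `x` does not occur in `g B` nor in `g C`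
    right
    simp at hA
    subst hA
    obtain ⟨h0, h1⟩ := hg
    have hone : (g Letter.B).length = 1 := by
      rw [length_eq_counts]
      simp only [zer, one, hgA] at h0 h1
      have eBA := (hcount Letter.A Letter.B).trans tBA
      have eCA := (hcount Letter.A Letter.C).trans tCA
      have eBC := (hcount Letter.C Letter.B).trans tBC
      have eCC := (hcount Letter.C Letter.C).trans tCC
      -- `r` and `s` stand for the numbers of `C`s in the `f`-images of the letters other than `x`;
      -- for `x ≠ B`, compatibility gives `g B` one more occurrence of one of these letters and one
      -- fewer of the other than `g C`
      have aux : ∀ m n m' n' r s : ℕ, m * r + n * s = 1 → m' * r + n' * s = 1 →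
          m = m' + 1 → n' = n + 1 → m + n = 1 := by
        intro m n m' n' r s h1 h2 h3 h4
        subst h3 h4
        have hrs : r = s := by
          simp only [add_mul, one_mul] at h1 h2
          omega
        subst hrs
        rw [← add_mul] at h1
        exact Nat.eq_one_of_mul_eq_one_right h1
      cases x
      · simp [hfx] at h0 h1 eBA eCA eBC eCC
        simp only [eBA.1.1, eCA.1.1] at h0 h1 eBC eCC ⊢
        have := aux _ _ _ _ _ _ (by simpa using eBC) (by simpa using eCC) (by omega) (by omega)
        omega
      · simp [hfx] at h0 h1 eBA eCA eBC eCC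
        simp only [eBA.1.2, eCA.1.2] at h0 h1 eBC eCC ⊢
        have e1 : (g Letter.B).count Letter.A = (g Letter.C).count Letter.A + 1 := by omega
        have e2 : (g Letter.B).count Letter.C = (g Letter.C).count Letter.C + 1 := by omega
        rw [e1, e2] at eBC
        simp only [add_mul, one_mul] at eBC eCC
        have r1 : (f Letter.A).count Letter.C = 0 := by omega
        have r2 : (f Letter.C).count Letter.C = 0 := by omega
        simp [r1, r2] at eCC
      · simp [hfx] at h0 h1 eBA eCA eBC eCC
        simp only [eBA.2, eCA.2] at h0 h1 eBC eCC ⊢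
        have := aux ((g Letter.B).count Letter.B) ((g Letter.B).count Letter.A)
          ((g Letter.C).count Letter.B) ((g Letter.C).count Letter.A)
          ((f Letter.B).count Letter.C) ((f Letter.A).count Letter.C)
          (by omega) (by omega) (by omega) (by omega)
        omega
    exact List.length_eq_one_iff.mp hone
  · -- `g A = xy` with `f x = A` and `f y = C`
    left
    have hr : r = [] := by
      rcases r with _ | ⟨r1, r⟩
      · rfl
      · have := congrArg List.length hA
        have h2 := List.length_pos_iff.mpr (hf y)
        simp only [List.cons_append, List.map_cons, List.flatten_cons, List.length_cons,
          List.length_append, List.length_nil] at this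
        omega
    subst hr
    have hfy : f y = [Letter.C] := by
      rcases hy : f y with _ | ⟨r1, r⟩
      · exact absurd hy (hf y)
      · rw [List.map_cons, List.flatten_cons, hy] at hA
        simp at hA
        simp [hA.1, hA.2.1]
    have hxy : x ≠ y := by
      rintro rfl
      rw [hfx] at hfy
      simp at hfy
    obtain ⟨z, hzx, hzy⟩ := exists_third hxy
    have hcount' : ∀ c a, (g a).count x * (f x).count c + (g a).count y * (f y).count c
        + (g a).count z * (f z).count c = (theta t a).count c := by
      intro c a
      rw [← hcount c a]
      exact (sum_letters hxy hzx hzy (fun w => (g a).count w * (f w).count c)).symm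
    have eBA := (hcount' Letter.A Letter.B).trans tBA
    have eBB := (hcount' Letter.B Letter.B).trans tBB
    have eBC := (hcount' Letter.C Letter.B).trans tBC
    have eCB := (hcount' Letter.B Letter.C).trans tCB
    simp [hfx, hfy] at eBA eBB eBC eCB
    -- the number of `B`s in `f z` divides both `t` and `t + 1`
    have hd : (f z).count Letter.B = 1 := by
      have h1 : (f z).count Letter.B ∣ t := ⟨_, by rw [mul_comm]; exact eCB.symm⟩
      have h2 : (f z).count Letter.B ∣ t + 1 := ⟨_, by rw [mul_comm]; exact eBB.symm⟩
      exact Nat.dvd_one.mp ((Nat.dvd_add_right h1).mp h2)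
    rw [hd] at eBB
    have hzlen : (f z).length = 1 := by
      rw [length_eq_counts, hd]
      have h1 : (f z).count Letter.A = 0 := by
        rcases eBA.2 with h | h
        · omega
        · exact h
      have h2 : (f z).count Letter.C = 0 := by
        by_contra hne
        have : 1 ≤ (f z).count Letter.C := Nat.one_le_iff_ne_zero.mpr hne
        have : (g Letter.B).count z * 1 ≤ (g Letter.B).count z * (f z).count Letter.C :=
          Nat.mul_le_mul_left _ this
        omega
      omega
    intro a
    rcases forall_letters hxy hzx hzy a with rfl | rfl | rfl
    · simp [hfx]
    · simp [hfy]
    · exact hzlen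

/-- Every factorization of `theta t` into compatible morphisms has a factor with a long letter
image. The letter-to-letter map `ρ` absorbs the leading factors that map letters to letters (after
composition with the earlier ones), which by `theta_irreducible` are the only ones that can be
split off before `B` is mapped to a single letter by the remaining product. -/
lemma long_factor {t : ℕ} (ht : 1 ≤ t) (L : List Morph)
    (hL : ∀ ψ ∈ L, (∀ a, ψ a ≠ []) ∧ Compat ψ) (ρ : Letter → Letter)
    (h : ∀ a, (L.foldr compM idM a).map ρ = theta t a) :
    ∃ ψ ∈ L, ∃ a, t + 2 ≤ (ψ a).length := by
  induction L generalizing ρ with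
  | nil =>
    have := congrArg List.length (h Letter.B)
    simp [idM, theta] at this
  | cons φ L ih =>
    have hR : Compat (L.foldr compM idM) := compat_prod L fun ψ hψ => (hL ψ (by simp [hψ])).2
    have hcomp : ∀ a, ((L.foldr compM idM a).map (fun b => (φ b).map ρ)).flatten = theta t a := by
      intro a
      rw [← h a]
      simp [compM, List.map_flatten, Function.comp_def]
    rcases theta_irreducible ht (f := fun b => (φ b).map ρ)
      (by intro a; simpa using (hL φ (by simp)).1 a) hR hcomp with h1 | ⟨b, hb⟩
    · simp only [List.length_eq_one_iff] at h1
      choose τ hτ using h1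
      obtain ⟨ψ, hψ, a, ha⟩ := ih (fun ψ hψ => hL ψ (by simp [hψ])) τ (by
        intro a
        rw [← hcomp a]
        rw [List.map_eq_flatMap, List.flatMap_def]
        simp [hτ])
      exact ⟨ψ, by simp [hψ], a, ha⟩
    · refine ⟨φ, by simp, b, ?_⟩
      have := congrArg List.length (hcomp Letter.B)
      rw [hb] at this
      simp [theta] at this
      omega

/-! ### Orbits of interval exchanges -/

lemma zIter_spec {f g : ℝ → ℝ} {D : Set ℝ} (hf : ∀ x ∈ D, f x ∈ D) (hg : ∀ x ∈ D, g x ∈ D)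
    (hfg : ∀ x ∈ D, f (g x) = x) {x : ℝ} (hx : x ∈ D) (n : ℤ) :
    zIter f g n x ∈ D ∧ zIter f g (n + 1) x = f (zIter f g n x) := by
  have hfi : ∀ n : ℕ, f^[n] x ∈ D := by
    intro n
    induction n with
    | zero => exact hx
    | succ n ih => rw [Function.iterate_succ_apply']; exact hf _ ih
  have hgi : ∀ n : ℕ, g^[n] x ∈ D := by
    intro n
    induction n with
    | zero => exact hx
    | succ n ih => rw [Function.iterate_succ_apply']; exact hg _ ih
  match n with
  | Int.ofNat n => exact ⟨hfi n, Function.iterate_succ_apply' f n x⟩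
  | Int.negSucc 0 =>
    refine ⟨hgi 1, ?_⟩
    change x = f (g x)
    exact (hfg x hx).symm
  | Int.negSucc (n + 1) =>
    refine ⟨hgi (n + 2), ?_⟩
    change g^[n + 1] x = f (g^[n + 1 + 1] x)
    rw [Function.iterate_succ_apply' g (n + 1), hfg _ (hgi (n + 1))]

section IET

variable {α β γ : ℝ}

lemma Tleft_mem (hα : 0 < α) (hβ : 0 < β) (hγ : 0 < γ) :
    ∀ x ∈ Set.Ico 0 (α + β + γ), Tleft α β γ x ∈ Set.Ico 0 (α + β + γ) := by
  rintro x ⟨h0, h1⟩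
  unfold Tleft
  split_ifs <;> constructor <;> linarith

lemma TleftInv_mem (hα : 0 < α) (hβ : 0 < β) (hγ : 0 < γ) :
    ∀ x ∈ Set.Ico 0 (α + β + γ), TleftInv α β γ x ∈ Set.Ico 0 (α + β + γ) := by
  rintro x ⟨h0, h1⟩
  unfold TleftInv
  split_ifs <;> constructor <;> linarith

lemma Tleft_TleftInv (hβ : 0 < β) :
    ∀ x ∈ Set.Ico 0 (α + β + γ), Tleft α β γ (TleftInv α β γ x) = x := by
  rintro x ⟨h0, h1⟩
  unfold Tleft TleftInv
  split_ifs <;> linarith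

lemma TleftInv_Tleft (hβ : 0 < β) :
    ∀ x ∈ Set.Ico 0 (α + β + γ), TleftInv α β γ (Tleft α β γ x) = x := by
  rintro x ⟨h0, h1⟩
  unfold Tleft TleftInv
  split_ifs <;> linarith

lemma Tright_mem (hα : 0 < α) (hβ : 0 < β) (hγ : 0 < γ) :
    ∀ x ∈ Set.Ioc 0 (α + β + γ), Tright α β γ x ∈ Set.Ioc 0 (α + β + γ) := by
  rintro x ⟨h0, h1⟩
  unfold Tright
  split_ifs <;> constructor <;> linarith

lemma TrightInv_mem (hα : 0 < α) (hβ : 0 < β) (hγ : 0 < γ) :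
    ∀ x ∈ Set.Ioc 0 (α + β + γ), TrightInv α β γ x ∈ Set.Ioc 0 (α + β + γ) := by
  rintro x ⟨h0, h1⟩
  unfold TrightInv
  split_ifs <;> constructor <;> linarith

lemma Tright_TrightInv (hβ : 0 < β) :
    ∀ x ∈ Set.Ioc 0 (α + β + γ), Tright α β γ (TrightInv α β γ x) = x := by
  rintro x ⟨h0, h1⟩
  unfold Tright TrightInv
  split_ifs <;> linarith

lemma TrightInv_Tright (hβ : 0 < β) :
    ∀ x ∈ Set.Ioc 0 (α + β + γ), TrightInv α β γ (Tright α β γ x) = x := by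
  rintro x ⟨h0, h1⟩
  unfold Tright TrightInv
  split_ifs <;> linarith

end IET

/-! ### The morphisms `theta t` are 3iet preserving -/

/-- `CodedPath f code x l y`: the first `l.length` points of the `f`-orbit of `x` are coded by the
word `l`, and the next point of that orbit is `y`. -/
def CodedPath (f : ℝ → ℝ) (code : ℝ → Letter) : ℝ → List Letter → ℝ → Prop
  | x, [], y => x = y
  | x, a :: l, y => code x = a ∧ CodedPath f code (f x) l y

lemma CodedPath.iterate {f : ℝ → ℝ} {code : ℝ → Letter} {l : List Letter} {x y : ℝ}
    (h : CodedPath f code x l y) :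
    f^[l.length] x = y ∧ ∀ (i : ℕ) (hi : i < l.length), code (f^[i] x) = l.get ⟨i, hi⟩ := by
  induction l generalizing x with
  | nil => exact ⟨h, fun i hi => absurd hi (by simp)⟩
  | cons a l ih =>
    obtain ⟨h1, h2⟩ := h
    obtain ⟨h3, h4⟩ := ih h2
    refine ⟨by simpa using h3, ?_⟩
    rintro (_ | i) hi
    · simpa using h1
    · simpa using h4 i (by simpa using hi)

/-- If `f` on `D ⊆ D'` is obtained from the bijection `f'` of `D'` by following, from each `x ∈ D`,
the `f'`-orbit along the path coded by the word `φ (code x)`, then `φ` maps the coding of the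
`f`-orbit of a point to the coding of its `f'`-orbit. -/
lemma image_coding {f g f' g' : ℝ → ℝ} {code code' : ℝ → Letter} {D D' : Set ℝ} {φ : Morph}
    (hf : ∀ x ∈ D, f x ∈ D) (hg : ∀ x ∈ D, g x ∈ D) (hfg : ∀ x ∈ D, f (g x) = x)
    (hf' : ∀ x ∈ D', f' x ∈ D') (hg' : ∀ x ∈ D', g' x ∈ D') (hfg' : ∀ x ∈ D', f' (g' x) = x)
    (hgf' : ∀ x ∈ D', g' (f' x) = x) (hD : D ⊆ D') (hφ : ∀ a, φ a ≠ [])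
    (hpath : ∀ x ∈ D, CodedPath f' code' x (φ (code x)) (f x))
    {x : ℝ} (hx : x ∈ D) {v : ℤ → Letter}
    (hv : IsImageWord φ (fun n => code (zIter f g n x)) v) :
    v = fun n => code' (zIter f' g' n x) := by
  obtain ⟨c, hc0, hc1, hc2⟩ := hv
  have hX := zIter_spec hf hg hfg hx
  have hZ := zIter_spec hf' hg' hfg' (hD hx)
  set X : ℤ → ℝ := fun n => zIter f g n x with hXdef
  set Z : ℤ → ℝ := fun n => zIter f' g' n x with hZdef
  have hZi : ∀ (i : ℕ) (n : ℤ), Z (n + i) = f'^[i] (Z n) := by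
    intro i n
    induction i with
    | zero => simp
    | succ i ih =>
      rw [Function.iterate_succ_apply', ← ih, ← (hZ _).2]
      push_cast
      rw [add_assoc]
  have hinj : ∀ (i : ℕ) (a b : ℝ), a ∈ D' → b ∈ D' → f'^[i] a = f'^[i] b → a = b := by
    intro i
    induction i with
    | zero => intro a b _ _ h; exact h
    | succ i ih =>
      intro a b ha hb h
      have := ih (f' a) (f' b) (hf' a ha) (hf' b hb) h
      rw [← hgf' a ha, ← hgf' b hb, this]
  have hstep : ∀ m : ℤ, Z (c (m + 1)) = f'^[(φ (code (X m))).length] (Z (c m)) := by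
    intro m
    rw [hc1, hZi]
  have hret : ∀ m : ℤ, X (m + 1) = f'^[(φ (code (X m))).length] (X m) := by
    intro m
    rw [(hpath (X m) (hX m).1).iterate.1]
    exact (hX m).2
  have hmain : ∀ m : ℤ, Z (c m) = X m := by
    intro m
    induction m with
    | zero => rw [hc0]; rfl
    | succ i ih => rw [hstep, hret, ih]
    | pred i ih =>
      have h1 := hstep (-(i : ℤ) - 1)
      have h2 := hret (-(i : ℤ) - 1)
      rw [sub_add_cancel] at h1 h2
      exact hinj _ _ _ (hZ _).1 (hD (hX _).1) (by rw [← h1, ← h2, ih])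
  have hlt : ∀ m, c m + 1 ≤ c (m + 1) := by
    intro m
    have h1 := List.length_pos_iff.mpr (hφ (code (zIter f g m x)))
    have h2 := hc1 m
    simp only at h2
    omega
  -- the blocks cover all of `ℤ`
  have hcover : ∀ n : ℤ, ∃ m : ℤ, c m ≤ n ∧ n < c (m + 1) := by
    intro n
    induction n with
    | zero => exact ⟨0, by rw [hc0], by have := hlt 0; omega⟩
    | succ i ih =>
      obtain ⟨m, h1, h2⟩ := ih
      by_cases h : (i : ℤ) + 1 < c (m + 1)
      · exact ⟨m, by omega, h⟩
      · exact ⟨m + 1, by omega, by have := hlt (m + 1); omega⟩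
    | pred i ih =>
      obtain ⟨m, h1, h2⟩ := ih
      by_cases h : c m ≤ -(i : ℤ) - 1
      · exact ⟨m, h, by omega⟩
      · have := hlt (m - 1)
        rw [sub_add_cancel] at this
        exact ⟨m - 1, by omega, by rw [sub_add_cancel]; omega⟩
  funext n
  obtain ⟨m, h1, h2⟩ := hcover n
  obtain ⟨i, hi⟩ := Int.le.dest h1
  rw [hc1] at h2
  have hil : i < (φ (code (X m))).length := by
    simp only [hXdef]
    simp only at h2
    omega
  have e1 := hc2 m i hil
  have e2 := (hpath (X m) (hX m).1).iterate.2 i hil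
  rw [hi] at e1
  rw [e1]
  change _ = code' (Z n)
  rw [← hi, hZi, hmain]
  exact e2.symm

lemma indep_step {a c : ℝ} (h : LinearIndependent ℚ ![a, c]) (t : ℕ) :
    LinearIndependent ℚ ![a + t * c, a + (t + 1) * c] := by
  rw [LinearIndependent.pair_iff] at h ⊢
  intro r s hrs
  obtain ⟨h1, h2⟩ := h (r + s) (r * t + s * (t + 1)) (by
    rw [← hrs]
    simp only [Rat.smul_def]
    push_cast
    ring)
  have hs : s = 0 := by linear_combination h2 - t * h1
  exact ⟨by linear_combination h1 - hs, hs⟩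

/-- A run of `n` letters `B`, during which `f` is a translation by `d`, prepended to a path. -/
lemma path_replicate {f : ℝ → ℝ} {code : ℝ → Letter} {d : ℝ} {l : List Letter} {y : ℝ} (n : ℕ)
    (x : ℝ) (h1 : ∀ i : ℕ, i < n → code (x + i * d) = Letter.B ∧ f (x + i * d) = x + i * d + d)
    (h2 : CodedPath f code (x + n * d) l y) :
    CodedPath f code x (List.replicate n Letter.B ++ l) y := by
  induction n generalizing x with
  | zero => simpa using h2
  | succ n ih =>
    have h0 := h1 0 (by omega)
    simp only [Nat.cast_zero, zero_mul, add_zero] at h0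
    refine ⟨h0.1, ?_⟩
    rw [h0.2]
    change CodedPath f code (x + d) (List.replicate n Letter.B ++ l) y
    apply ih
    · intro i hi
      have := h1 (i + 1) (by omega)
      push_cast at this
      rw [show x + d + i * d = x + (i + 1) * d by ring]
      exact this
    · push_cast at h2
      rwa [show x + d + n * d = x + (n + 1) * d by ring]

/-- The exchange with parameters `(α, β, γ)` is induced on `[0, α + β + γ)` by the one with
parameters `(α, tγ + (t+1)β, α + β + γ)`, with return words given by `theta t`. The middle interval
of the latter is translated by `β + γ`, which produces the runs of `B`s. -/
lemma theta_path_left {α β γ : ℝ} (hβ : 0 < β) (hγ : 0 < γ) (t : ℕ) :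
    ∀ x ∈ Set.Ico 0 (α + β + γ),
      CodedPath (Tleft α (t * γ + (t + 1) * β) (α + β + γ)) (codeLeft α (t * γ + (t + 1) * β)) x
        (theta t (codeLeft α β x)) (Tleft α β γ x) := by
  rintro x ⟨h0, h1⟩
  have ht : (0 : ℝ) ≤ t := Nat.cast_nonneg t
  have p1 := mul_nonneg ht hβ.le
  have p2 := mul_nonneg ht hγ.le
  by_cases hA : x < α
  · have e : codeLeft α β x = Letter.A := by simp [codeLeft, hA]
    rw [e]
    have e2 : Tleft α (t * γ + (t + 1) * β) (α + β + γ) x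
        = x + (t * γ + (t + 1) * β) + (α + β + γ) := by simp [Tleft, hA]
    refine ⟨by simp [codeLeft, hA], ?_, ?_⟩
    · rw [e2, codeLeft, if_neg (by nlinarith), if_neg (by nlinarith)]
    · rw [e2]
      change Tleft _ _ _ _ = _
      rw [Tleft, if_neg (by nlinarith), if_neg (by nlinarith), Tleft, if_pos hA]
      ring
  · have key : ∀ n : ℕ, (∀ i : ℕ, i < n → x + i * (β + γ) < α + (t * γ + (t + 1) * β)) →
        α + (t * γ + (t + 1) * β) ≤ x + n * (β + γ) →
        x + n * (β + γ) - α - (t * γ + (t + 1) * β) = Tleft α β γ x →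
        CodedPath (Tleft α (t * γ + (t + 1) * β) (α + β + γ)) (codeLeft α (t * γ + (t + 1) * β)) x
          (List.replicate n Letter.B ++ [Letter.C]) (Tleft α β γ x) := by
      intro n hn1 hn2 hn3
      apply path_replicate (d := β + γ)
      · intro i hi
        have hi1 := hn1 i hi
        have : 0 ≤ (i : ℝ) * (β + γ) := by positivity
        have hn : ¬ (x + i * (β + γ) < α) := by linarith
        rw [codeLeft, Tleft, if_neg hn, if_pos hi1, if_neg hn, if_pos hi1]
        exact ⟨rfl, by ring⟩
      · have hn : ¬ (x + n * (β + γ) < α) := by nlinarith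
        refine ⟨?_, ?_⟩
        · rw [codeLeft, if_neg hn, if_neg (by linarith)]
        · change Tleft _ _ _ _ = _
          rw [← hn3, Tleft, if_neg hn, if_neg (by linarith)]
    by_cases hB : x < α + β
    · have e : codeLeft α β x = Letter.B := by simp [codeLeft, hA, hB]
      rw [e]
      apply key
      · intro i hi
        have : (i : ℝ) ≤ t := by exact_mod_cast Nat.lt_succ_iff.mp hi
        nlinarith
      · push_cast; nlinarith
      · rw [Tleft, if_neg hA, if_pos hB]; push_cast; ring
    · have e : codeLeft α β x = Letter.C := by simp [codeLeft, hA, hB]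
      rw [e]
      apply key
      · intro i hi
        have : (i : ℝ) + 1 ≤ t := by exact_mod_cast hi
        nlinarith
      · nlinarith
      · rw [Tleft, if_neg hA, if_neg hB]; ring

/-- The analogue of `theta_path_left` for the right-closed convention. -/
lemma theta_path_right {α β γ : ℝ} (hβ : 0 < β) (hγ : 0 < γ) (t : ℕ) :
    ∀ x ∈ Set.Ioc 0 (α + β + γ),
      CodedPath (Tright α (t * γ + (t + 1) * β) (α + β + γ)) (codeRight α (t * γ + (t + 1) * β)) x
        (theta t (codeRight α β x)) (Tright α β γ x) := by
  rintro x ⟨h0, h1⟩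
  have ht : (0 : ℝ) ≤ t := Nat.cast_nonneg t
  have p1 := mul_nonneg ht hβ.le
  have p2 := mul_nonneg ht hγ.le
  by_cases hA : x ≤ α
  · have e : codeRight α β x = Letter.A := by simp [codeRight, hA]
    rw [e]
    have e2 : Tright α (t * γ + (t + 1) * β) (α + β + γ) x
        = x + (t * γ + (t + 1) * β) + (α + β + γ) := by simp [Tright, hA]
    refine ⟨by simp [codeRight, hA], ?_, ?_⟩
    · rw [e2, codeRight, if_neg (by nlinarith), if_neg (by nlinarith)]
    · rw [e2]
      change Tright _ _ _ _ = _
      rw [Tright, if_neg (by nlinarith), if_neg (by nlinarith), Tright, if_pos hA]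
      ring
  · have key : ∀ n : ℕ, (∀ i : ℕ, i < n → x + i * (β + γ) ≤ α + (t * γ + (t + 1) * β)) →
        α + (t * γ + (t + 1) * β) < x + n * (β + γ) →
        x + n * (β + γ) - α - (t * γ + (t + 1) * β) = Tright α β γ x →
        CodedPath (Tright α (t * γ + (t + 1) * β) (α + β + γ)) (codeRight α (t * γ + (t + 1) * β)) x
          (List.replicate n Letter.B ++ [Letter.C]) (Tright α β γ x) := by
      intro n hn1 hn2 hn3
      apply path_replicate (d := β + γ)
      · intro i hi
        have hi1 := hn1 i hi
        have : 0 ≤ (i : ℝ) * (β + γ) := by positivity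
        have hn : ¬ (x + i * (β + γ) ≤ α) := by linarith
        rw [codeRight, Tright, if_neg hn, if_pos hi1, if_neg hn, if_pos hi1]
        exact ⟨rfl, by ring⟩
      · have hn : ¬ (x + n * (β + γ) ≤ α) := by nlinarith
        refine ⟨?_, ?_⟩
        · rw [codeRight, if_neg hn, if_neg (by linarith)]
        · change Tright _ _ _ _ = _
          rw [← hn3, Tright, if_neg hn, if_neg (by linarith)]
    by_cases hB : x ≤ α + β
    · have e : codeRight α β x = Letter.B := by simp [codeRight, hA, hB]
      rw [e]
      apply key
      · intro i hi
        have : (i : ℝ) ≤ t := by exact_mod_cast Nat.lt_succ_iff.mp hi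
        nlinarith
      · push_cast; nlinarith
      · rw [Tright, if_neg hA, if_pos hB]; push_cast; ring
    · have e : codeRight α β x = Letter.C := by simp [codeRight, hA, hB]
      rw [e]
      apply key
      · intro i hi
        have : (i : ℝ) + 1 ≤ t := by exact_mod_cast hi
        nlinarith
      · nlinarith
      · rw [Tright, if_neg hA, if_neg hB]; ring

lemma theta_preserves (t : ℕ) : Preserves3iet (theta t) := by
  have hne : ∀ a, theta t a ≠ [] := by intro a; cases a <;> simp [theta]
  refine ⟨hne, ?_⟩
  rintro u v ⟨α, β, γ, x, hα, hβ, hγ, hind, hu⟩ huv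
  have hβ' : 0 < t * γ + (t + 1) * β := by positivity
  have hγ' : 0 < α + β + γ := by positivity
  refine ⟨α, t * γ + (t + 1) * β, α + β + γ, x, hα, hβ', hγ', ?_, ?_⟩
  · convert indep_step hind t using 2
    · ring
    · congr 1; ring
  · rcases hu with ⟨hx, rfl⟩ | ⟨hx, rfl⟩
    · have hsub : Set.Ico 0 (α + β + γ) ⊆ Set.Ico 0 (α + (t * γ + (t + 1) * β) + (α + β + γ)) :=
        Set.Ico_subset_Ico_right (by linarith)
      exact Or.inl ⟨hsub hx, image_coding (Tleft_mem hα hβ hγ) (TleftInv_mem hα hβ hγ)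
        (Tleft_TleftInv hβ) (Tleft_mem hα hβ' hγ') (TleftInv_mem hα hβ' hγ')
        (Tleft_TleftInv hβ') (TleftInv_Tleft hβ') hsub hne (theta_path_left hβ hγ t) hx huv⟩
    · have hsub : Set.Ioc 0 (α + β + γ) ⊆ Set.Ioc 0 (α + (t * γ + (t + 1) * β) + (α + β + γ)) :=
        Set.Ioc_subset_Ioc_right (by linarith)
      exact Or.inr ⟨hsub hx, image_coding (Tright_mem hα hβ hγ) (TrightInv_mem hα hβ hγ)
        (Tright_TrightInv hβ) (Tright_mem hα hβ' hγ') (TrightInv_mem hα hβ' hγ')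
        (Tright_TrightInv hβ') (TrightInv_Tright hβ') hsub hne (theta_path_right hβ hγ t) hx huv⟩

/-! ### Image words exist -/

/-- The word asserted by `IsImageWord` exists: the partial sums of the block lengths are strictly
increasing, so a position lies in at most one block. -/
lemma exists_image (φ : Morph) (hφ : ∀ a, φ a ≠ []) (u : ℤ → Letter) :
    ∃ v, IsImageWord φ u v := by
  obtain ⟨c, hc0, hc1⟩ : ∃ c : ℤ → ℤ, c 0 = 0 ∧ ∀ m, c (m + 1) = c m + (φ (u m)).length := by
    refine ⟨fun m => ∑ i ∈ Finset.Ico 0 m, ((φ (u i)).length : ℤ)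
      - ∑ i ∈ Finset.Ico m 0, ((φ (u i)).length : ℤ), by simp, ?_⟩
    intro m
    beta_reduce
    rcases le_or_gt 0 m with h | h
    · rw [Finset.Ico_eq_empty_of_le (show (0 : ℤ) ≤ m + 1 by omega),
        Finset.Ico_eq_empty_of_le h, ← Finset.insert_Ico_right_eq_Ico_add_one h]
      simp [add_comm]
    · rw [Finset.Ico_eq_empty_of_le (show m + 1 ≤ 0 by omega),
        Finset.Ico_eq_empty_of_le h.le, ← Finset.insert_Ico_add_one_left_eq_Ico h]
      simp
  have hmono : StrictMono c := by
    apply strictMono_int_of_lt_succ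
    intro m
    have := List.length_pos_iff.mpr (hφ (u m))
    rw [hc1]
    omega
  have hex : ∀ n : ℤ, ∃ a : Letter, ∀ (m : ℤ) (i : ℕ) (h : i < (φ (u m)).length),
      c m + (i : ℤ) = n → a = (φ (u m)).get ⟨i, h⟩ := by
    intro n
    by_cases hn : ∃ (m : ℤ) (i : ℕ), i < (φ (u m)).length ∧ c m + (i : ℤ) = n
    · obtain ⟨m, i, h, rfl⟩ := hn
      refine ⟨(φ (u m)).get ⟨i, h⟩, ?_⟩
      intro m' i' h' e
      have hm : m = m' := by
        rcases lt_trichotomy m m' with hlt | heq | hlt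
        · have h1 := hmono.monotone (show m + 1 ≤ m' by omega)
          rw [hc1] at h1
          omega
        · exact heq
        · have h1 := hmono.monotone (show m' + 1 ≤ m by omega)
          rw [hc1] at h1
          omega
      subst hm
      have hi : i = i' := by omega
      subst hi
      rfl
    · exact ⟨Letter.A, fun m i h e => absurd ⟨m, i, h, e⟩ hn⟩
  choose v hv using hex
  exact ⟨v, c, hc0, hc1, fun m i h => hv _ m i h rfl⟩

/-! ### Heights along image words -/

/-- The displacement of the 3-interval exchange with `α + β = a`, `β + γ = c` on a letter. -/
def disp (a c : ℝ) : Letter → ℝ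
  | Letter.A => c
  | Letter.B => c - a
  | Letter.C => -a

/-- The orbit underlying a 3iet word: a bounded sequence whose increments are the displacements
of the letters. -/
lemma exists_orbit {v : ℤ → Letter} (hv : Is3ietWord v) :
    ∃ a c : ℝ, 0 < a ∧ 0 < c ∧ LinearIndependent ℚ ![a, c] ∧
      ∃ y : ℕ → ℝ, (∀ n, 0 ≤ y n ∧ y n ≤ a + c) ∧
        ∀ n : ℕ, y (n + 1) = y n + disp a c (v n) := by
  obtain ⟨α, β, γ, x, hα, hβ, hγ, hind, hv⟩ := hv
  refine ⟨α + β, β + γ, by linarith, by linarith, hind, ?_⟩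
  rcases hv with ⟨hx, rfl⟩ | ⟨hx, rfl⟩
  · have hy : ∀ n : ℕ, (Tleft α β γ)^[n] x ∈ Set.Ico 0 (α + β + γ) := by
      intro n
      induction n with
      | zero => exact hx
      | succ n ih => rw [Function.iterate_succ_apply']; exact Tleft_mem hα hβ hγ _ ih
    refine ⟨fun n => (Tleft α β γ)^[n] x, fun n => ⟨(hy n).1, by linarith [(hy n).2]⟩, ?_⟩
    intro n
    change _ = _ + disp _ _ (codeLeft α β ((Tleft α β γ)^[n] x))
    beta_reduce
    rw [Function.iterate_succ_apply']
    simp only [Tleft, codeLeft]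
    split_ifs <;> simp only [disp] <;> ring
  · have hy : ∀ n : ℕ, (Tright α β γ)^[n] x ∈ Set.Ioc 0 (α + β + γ) := by
      intro n
      induction n with
      | zero => exact hx
      | succ n ih => rw [Function.iterate_succ_apply']; exact Tright_mem hα hβ hγ _ ih
    refine ⟨fun n => (Tright α β γ)^[n] x, fun n => ⟨(hy n).1.le, by linarith [(hy n).2]⟩, ?_⟩
    intro n
    change _ = _ + disp _ _ (codeRight α β ((Tright α β γ)^[n] x))
    beta_reduce
    rw [Function.iterate_succ_apply']
    simp only [Tright, codeRight]
    split_ifs <;> simp only [disp] <;> ring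

/-- The total displacement along a word. -/
noncomputable def dispW (a c : ℝ) (l : List Letter) : ℝ := c * zer l - a * one l

lemma dispW_cons (a c : ℝ) (b : Letter) (l : List Letter) :
    dispW a c (b :: l) = disp a c b + dispW a c l := by
  cases b <;> simp [dispW, disp, zer, one] <;> ring

lemma orbit_block {a c : ℝ} {y : ℕ → ℝ} {v : ℤ → Letter}
    (hy : ∀ n : ℕ, y (n + 1) = y n + disp a c (v n)) (l : List Letter) (n : ℕ)
    (h : ∀ (i : ℕ) (hi : i < l.length), v ((n : ℤ) + i) = l.get ⟨i, hi⟩) :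
    y (n + l.length) = y n + dispW a c l := by
  induction l generalizing n with
  | nil => simp [dispW, zer, one]
  | cons b l ih =>
    have h0 := h 0 (by simp)
    have h1 := ih (n + 1) (by
      intro i hi
      have := h (i + 1) (by simpa using hi)
      push_cast at this ⊢
      rw [show (n : ℤ) + 1 + i = n + (i + 1) by ring]
      simpa using this)
    simp at h0
    rw [dispW_cons, List.length_cons, show n + (l.length + 1) = n + 1 + l.length by ring, h1, hy, h0]
    ring

/-- The orbit points of the image word at the beginnings of the blocks. -/
lemma exists_heights {g : Morph} (hg : Preserves3iet g) {u : ℤ → Letter} (hu : Is3ietWord u) :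
    ∃ a c : ℝ, 0 < a ∧ 0 < c ∧ LinearIndependent ℚ ![a, c] ∧
      ∃ Y : ℕ → ℝ, (∀ n, 0 ≤ Y n ∧ Y n ≤ a + c) ∧
        ∀ n : ℕ, Y (n + 1) = Y n + dispW a c (g (u n)) := by
  obtain ⟨v, hv⟩ := exists_image g hg.1 u
  obtain ⟨a, c, ha, hc, hind, y, hy1, hy2⟩ := exists_orbit (hg.2 u v hu hv)
  obtain ⟨p, hp0, hp1, hp2⟩ := hv
  refine ⟨a, c, ha, hc, hind, fun n => y (p n).toNat, fun n => hy1 _, ?_⟩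
  have hpos : ∀ n : ℕ, 0 ≤ p n := by
    intro n
    induction n with
    | zero => simp [hp0]
    | succ n ih => push_cast; rw [hp1]; omega
  intro n
  have e : (p ((n + 1 : ℕ) : ℤ)).toNat = (p n).toNat + (g (u n)).length := by
    push_cast
    rw [hp1]
    have := hpos n
    omega
  simp only
  rw [e]
  apply orbit_block hy2
  intro i hi
  rw [Int.toNat_of_nonneg (hpos n)]
  exact hp2 n i hi

/-! ### 3iet words with long periodic runs -/

lemma exists_small (K : ℕ) (hK : 1 ≤ K) : ∃ ε : ℝ, 0 < ε ∧ Irrational ε ∧ (K + 1) * ε ≤ 1 := by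
  refine ⟨√2 / ((2 * (K + 1) : ℕ) : ℝ), by positivity,
    irrational_sqrt_two.div_natCast (by omega), ?_⟩
  have h2 : √2 ≤ 2 := by
    rw [Real.sqrt_le_left (by norm_num)]; norm_num
  have hK' : (0 : ℝ) < K + 1 := by positivity
  push_cast
  rw [mul_div_assoc', div_le_one (by positivity)]
  nlinarith

/-- Two elements of `ℤ + ℤε`, with `ε` irrational, are independent over `ℚ` as soon as their
coordinates have nonzero determinant. -/
lemma indep_irr {a c ε : ℝ} (p q r s : ℤ) (hε : Irrational ε) (ha : a = p + q * ε)
    (hc : c = r + s * ε) (hdet : p * s - q * r ≠ 0) : LinearIndependent ℚ ![a, c] := by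
  rw [LinearIndependent.pair_iff]
  intro x y h
  simp only [Rat.smul_def, ha, hc] at h
  have h1 : ((x * p + y * r : ℚ) : ℝ) + ((x * q + y * s : ℚ) : ℝ) * ε = 0 := by
    push_cast
    linear_combination h
  have h2 : x * q + y * s = 0 := by
    by_contra hne
    apply hε
    refine ⟨-(x * p + y * r) / (x * q + y * s), ?_⟩
    have hne' : ((x * q + y * s : ℚ) : ℝ) ≠ 0 := by exact_mod_cast hne
    rw [Rat.cast_div, div_eq_iff hne']
    push_cast at h1 ⊢
    linear_combination -h1
  have h3 : x * p + y * r = 0 := by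
    rw [h2] at h1
    simp only [Rat.cast_zero, zero_mul, add_zero] at h1
    exact_mod_cast h1
  have hdetQ : (p * s - q * r : ℚ) ≠ 0 := by exact_mod_cast hdet
  constructor
  · apply (mul_eq_zero.mp (show x * (p * s - q * r : ℚ) = 0 by
      linear_combination s * h3 - r * h2)).resolve_right hdetQ
  · apply (mul_eq_zero.mp (show y * (p * s - q * r : ℚ) = 0 by
      linear_combination p * h2 - q * h3)).resolve_right hdetQ

/-- A 3iet word beginning with `(AC)^K B^K`. -/
lemma exists_word_one (K : ℕ) (hK : 1 ≤ K) : ∃ u : ℤ → Letter, Is3ietWord u ∧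
    (∀ j < K, u ((2 * j : ℕ) : ℤ) = Letter.A ∧ u ((2 * j + 1 : ℕ) : ℤ) = Letter.C) ∧
    ∀ j < K, u ((2 * K + j : ℕ) : ℤ) = Letter.B := by
  obtain ⟨ε, hε, hirr, hKε⟩ := exists_small K hK
  have hA : ∀ x : ℝ, x < 1 → codeLeft 1 1 x = Letter.A ∧ Tleft 1 1 (1 + ε) x = x + 2 + ε := by
    intro x hx
    rw [codeLeft, Tleft, if_pos hx, if_pos hx]
    exact ⟨rfl, by ring⟩
  have hB : ∀ x : ℝ, 1 ≤ x → x < 2 →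
      codeLeft 1 1 x = Letter.B ∧ Tleft 1 1 (1 + ε) x = x + ε := by
    intro x hx hx2
    rw [codeLeft, Tleft, if_neg (by linarith), if_pos (by linarith), if_neg (by linarith),
      if_pos (by linarith)]
    exact ⟨rfl, by ring⟩
  have hC : ∀ x : ℝ, 2 ≤ x → codeLeft 1 1 x = Letter.C ∧ Tleft 1 1 (1 + ε) x = x - 2 := by
    intro x hx
    rw [codeLeft, Tleft, if_neg (by linarith), if_neg (by linarith), if_neg (by linarith),
      if_neg (by linarith)]
    exact ⟨rfl, by ring⟩
  -- the exchange moves by `ε` along `AC` and along `B`; the orbit starts `K` steps left of `1`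
  set T := Tleft 1 1 (1 + ε) with hT
  set x₀ : ℝ := 1 - K * ε with hx₀
  have hrun : ∀ j : ℕ, j < K → (j : ℝ) * ε + ε ≤ K * ε := by
    intro j hj
    have : (j : ℝ) + 1 ≤ K := by exact_mod_cast hj
    nlinarith
  have h1 : ∀ j : ℕ, j ≤ K → T^[2 * j] x₀ = x₀ + j * ε := by
    intro j
    induction j with
    | zero => simp
    | succ j ih =>
      intro hj
      have hr := hrun j hj
      have : 0 ≤ (j : ℝ) * ε := by positivity
      have e1 := (hA (x₀ + j * ε) (by linarith)).2
      have e2 := (hC (x₀ + j * ε + 2 + ε) (by linarith)).2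
      rw [show 2 * (j + 1) = 2 * j + 1 + 1 by ring, Function.iterate_succ_apply',
        Function.iterate_succ_apply', ih (by omega), e1, e2]
      push_cast
      ring
  have h2 : ∀ j : ℕ, j ≤ K → T^[2 * K + j] x₀ = 1 + j * ε := by
    intro j
    induction j with
    | zero => intro _; rw [add_zero, h1 K le_rfl, hx₀]; simp
    | succ j ih =>
      intro hj
      have hr := hrun j hj
      have : 0 ≤ (j : ℝ) * ε := by positivity
      have e1 := (hB (1 + j * ε) (by linarith) (by linarith)).2
      rw [← add_assoc, Function.iterate_succ_apply', ih (by omega), e1]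
      push_cast
      ring
  refine ⟨uLeft 1 1 (1 + ε) x₀, ⟨1, 1, 1 + ε, x₀, one_pos, one_pos, by linarith,
    indep_irr 2 0 2 1 hirr (by norm_num) (by push_cast; ring) (by norm_num),
    Or.inl ⟨⟨by linarith, by nlinarith⟩, rfl⟩⟩, ?_, ?_⟩
  · intro j hj
    have hr := hrun j hj
    have : 0 ≤ (j : ℝ) * ε := by positivity
    constructor
    · change codeLeft 1 1 (T^[2 * j] x₀) = _
      rw [h1 j hj.le]
      exact (hA _ (by linarith)).1
    · change codeLeft 1 1 (T^[2 * j + 1] x₀) = _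
      have e1 := (hA (x₀ + j * ε) (by linarith)).2
      rw [Function.iterate_succ_apply', h1 j hj.le, e1]
      exact (hC _ (by linarith)).1
  · intro j hj
    have hr := hrun j hj
    have : 0 ≤ (j : ℝ) * ε := by positivity
    change codeLeft 1 1 (T^[2 * K + j] x₀) = _
    rw [h2 j hj.le]
    exact (hB _ (by linarith) (by linarith)).1

/-- A 3iet word beginning with `(AAC)^K (AB)^K`. -/
lemma exists_word_two (K : ℕ) (hK : 1 ≤ K) : ∃ u : ℤ → Letter, Is3ietWord u ∧
    (∀ j < K, u ((3 * j : ℕ) : ℤ) = Letter.A ∧ u ((3 * j + 1 : ℕ) : ℤ) = Letter.A ∧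
      u ((3 * j + 2 : ℕ) : ℤ) = Letter.C) ∧
    ∀ j < K, u ((3 * K + 2 * j : ℕ) : ℤ) = Letter.A ∧
      u ((3 * K + 2 * j + 1 : ℕ) : ℤ) = Letter.B := by
  obtain ⟨ε, hε, hirr, hKε⟩ := exists_small K hK
  have hA : ∀ x : ℝ, x < 3 - ε →
      codeLeft (3 - ε) 1 x = Letter.A ∧ Tleft (3 - ε) 1 1 x = x + 2 := by
    intro x hx
    rw [codeLeft, Tleft, if_pos hx, if_pos hx]
    exact ⟨rfl, by ring⟩
  have hB : ∀ x : ℝ, 3 - ε ≤ x → x < 4 - ε →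
      codeLeft (3 - ε) 1 x = Letter.B ∧ Tleft (3 - ε) 1 1 x = x - 2 + ε := by
    intro x hx hx2
    rw [codeLeft, Tleft, if_neg (by linarith), if_pos (by linarith), if_neg (by linarith),
      if_pos (by linarith)]
    exact ⟨rfl, by ring⟩
  have hC : ∀ x : ℝ, 4 - ε ≤ x →
      codeLeft (3 - ε) 1 x = Letter.C ∧ Tleft (3 - ε) 1 1 x = x - 4 + ε := by
    intro x hx
    rw [codeLeft, Tleft, if_neg (by linarith), if_neg (by linarith), if_neg (by linarith),
      if_neg (by linarith)]
    exact ⟨rfl, by ring⟩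
  -- the exchange moves by `ε` along `AAC` and along `AB`; the orbit starts `K` steps left of `1 - ε`
  set T := Tleft (3 - ε) 1 1 with hT
  set x₀ : ℝ := 1 - ε - K * ε with hx₀
  have hrun : ∀ j : ℕ, j < K → (j : ℝ) * ε + ε ≤ K * ε := by
    intro j hj
    have : (j : ℝ) + 1 ≤ K := by exact_mod_cast hj
    nlinarith
  have h1 : ∀ j : ℕ, j ≤ K → T^[3 * j] x₀ = x₀ + j * ε := by
    intro j
    induction j with
    | zero => simp
    | succ j ih =>
      intro hj
      have hr := hrun j hj
      have : 0 ≤ (j : ℝ) * ε := by positivity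
      have e1 := (hA (x₀ + j * ε) (by linarith)).2
      have e2 := (hA (x₀ + j * ε + 2) (by linarith)).2
      have e3 := (hC (x₀ + j * ε + 2 + 2) (by linarith)).2
      rw [show 3 * (j + 1) = 3 * j + 1 + 1 + 1 by ring, Function.iterate_succ_apply',
        Function.iterate_succ_apply', Function.iterate_succ_apply', ih (by omega),
        e1, e2, e3]
      push_cast
      ring
  have h2 : ∀ j : ℕ, j ≤ K → T^[3 * K + 2 * j] x₀ = 1 - ε + j * ε := by
    intro j
    induction j with
    | zero => intro _; rw [mul_zero, add_zero, h1 K le_rfl, hx₀]; simp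
    | succ j ih =>
      intro hj
      have hr := hrun j hj
      have : 0 ≤ (j : ℝ) * ε := by positivity
      have e1 := (hA (1 - ε + j * ε) (by linarith)).2
      have e2 := (hB (1 - ε + j * ε + 2) (by linarith) (by linarith)).2
      rw [show 3 * K + 2 * (j + 1) = 3 * K + 2 * j + 1 + 1 by ring,
        Function.iterate_succ_apply', Function.iterate_succ_apply', ih (by omega),
        e1, e2]
      push_cast
      ring
  have hK1 : ε ≤ K * ε := by
    have : (1 : ℝ) ≤ K := by exact_mod_cast hK
    nlinarith
  refine ⟨uLeft (3 - ε) 1 1 x₀, ⟨3 - ε, 1, 1, x₀, by linarith, one_pos, one_pos,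
    indep_irr 4 (-1) 2 0 hirr (by push_cast; ring) (by norm_num) (by norm_num),
    Or.inl ⟨⟨by linarith, by linarith⟩, rfl⟩⟩, ?_, ?_⟩
  · intro j hj
    have hr := hrun j hj
    have : 0 ≤ (j : ℝ) * ε := by positivity
    refine ⟨?_, ?_, ?_⟩
    · change codeLeft (3 - ε) 1 (T^[3 * j] x₀) = _
      rw [h1 j hj.le]
      exact (hA _ (by linarith)).1
    · change codeLeft (3 - ε) 1 (T^[3 * j + 1] x₀) = _
      have e1 := (hA (x₀ + j * ε) (by linarith)).2
      rw [Function.iterate_succ_apply', h1 j hj.le, e1]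
      exact (hA _ (by linarith)).1
    · change codeLeft (3 - ε) 1 (T^[3 * j + 1 + 1] x₀) = _
      have e1 := (hA (x₀ + j * ε) (by linarith)).2
      have e2 := (hA (x₀ + j * ε + 2) (by linarith)).2
      rw [Function.iterate_succ_apply', Function.iterate_succ_apply', h1 j hj.le, e1, e2]
      exact (hC _ (by linarith)).1
  · intro j hj
    have hr := hrun j hj
    have : 0 ≤ (j : ℝ) * ε := by positivity
    constructor
    · change codeLeft (3 - ε) 1 (T^[3 * K + 2 * j] x₀) = _
      rw [h2 j hj.le]
      exact (hA _ (by linarith)).1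
    · change codeLeft (3 - ε) 1 (T^[3 * K + 2 * j + 1] x₀) = _
      have e1 := (hA (1 - ε + j * ε) (by linarith)).2
      rw [Function.iterate_succ_apply', h2 j hj.le, e1]
      exact (hB _ (by linarith) (by linarith)).1

/-! ### 3iet preserving morphisms are compatible -/

/-- If a sequence with values in `[0, b]` increases by `d` over each of `K` consecutive blocks of
length `p`, then `K * d` is at most `b` in absolute value. -/
lemma run_bound {Y : ℕ → ℝ} {b d : ℝ} (hY : ∀ n, 0 ≤ Y n ∧ Y n ≤ b) (s p K : ℕ)
    (h : ∀ j < K, Y (s + p * j + p) = Y (s + p * j) + d) : |K * d| ≤ b := by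
  have h1 : ∀ j ≤ K, Y (s + p * j) = Y s + j * d := by
    intro j
    induction j with
    | zero => simp
    | succ j ih =>
      intro hj
      rw [show s + p * (j + 1) = s + p * j + p by ring, h j hj, ih (by omega)]
      push_cast
      ring
  have h2 := h1 K le_rfl
  have h3 := hY (s + p * K)
  have h4 := hY s
  rw [abs_le]
  constructor <;> linarith

/-- Two vectors with natural coordinates that are both nearly orthogonal to `(c, -a)` are parallel:
their determinant is an integer, and it equals a small combination of the two inner products. -/
lemma parallel_of_bounds {a c : ℝ} (ha : 0 < a) (hc : 0 < c) (p₀ p₁ q₀ q₁ K : ℕ)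
    (hK : p₀ + p₁ + q₀ + q₁ < K) (hp : |K * (c * p₀ - a * p₁)| ≤ a + c)
    (hq : |K * (c * q₀ - a * q₁)| ≤ a + c) : p₀ * q₁ = p₁ * q₀ := by
  by_contra hne
  have hd : (1 : ℝ) ≤ |(p₀ * q₁ - p₁ * q₀ : ℝ)| := by
    have : (1 : ℤ) ≤ |(p₀ * q₁ - p₁ * q₀ : ℤ)| := by
      apply Int.one_le_abs
      intro h
      apply hne
      exact_mod_cast sub_eq_zero.mp h
    exact_mod_cast this
  set P := K * (c * p₀ - a * p₁)
  set Q := K * (c * q₀ - a * q₁)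
  have e : (a + c) * (K * (p₀ * q₁ - p₁ * q₀)) = (q₀ + q₁) * P - (p₀ + p₁) * Q := by
    simp only [P, Q]; ring
  clear_value P Q
  have hq0 : (0 : ℝ) ≤ q₀ + q₁ := by positivity
  have hp0 : (0 : ℝ) ≤ p₀ + p₁ := by positivity
  have hup : |(q₀ + q₁) * P - (p₀ + p₁) * Q| ≤ (p₀ + p₁ + q₀ + q₁) * (a + c) := by
    refine (abs_sub _ _).trans ?_
    rw [abs_mul, abs_mul, abs_of_nonneg hq0, abs_of_nonneg hp0]
    nlinarith
  rw [← e, abs_mul, abs_mul, abs_of_pos (by positivity : 0 < a + c), Nat.abs_cast] at hup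
  have hK' : (p₀ + p₁ + q₀ + q₁ : ℝ) < K := by exact_mod_cast hK
  have : (K : ℝ) * 1 ≤ K * |(p₀ * q₁ - p₁ * q₀ : ℝ)| :=
    mul_le_mul_of_nonneg_left hd (Nat.cast_nonneg K)
  have hac : 0 < a + c := by positivity
  nlinarith

/-- Obtained from a 3iet word beginning with `(AC)^K B^K`: the orbit of its image word is bounded, so
the displacements along the images of `AC` and of `B` are small. -/
lemma parallel_one {g : Morph} (hg : Preserves3iet g) :
    (zer (g Letter.A) + zer (g Letter.C)) * one (g Letter.B)
      = (one (g Letter.A) + one (g Letter.C)) * zer (g Letter.B) := by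
  obtain ⟨K, hK⟩ := exists_gt ((zer (g Letter.A) + zer (g Letter.C)) +
    (one (g Letter.A) + one (g Letter.C)) + zer (g Letter.B) + one (g Letter.B))
  obtain ⟨u, hu, hu1, hu2⟩ := exists_word_one K (by omega)
  obtain ⟨a, c, ha, hc, -, Y, hY1, hY2⟩ := exists_heights hg hu
  refine parallel_of_bounds ha hc _ _ _ _ K hK ?_ ?_
  · apply run_bound hY1 0 2 K
    intro j hj
    obtain ⟨e1, e2⟩ := hu1 j hj
    rw [zero_add, show 2 * j + 2 = 2 * j + 1 + 1 by ring, hY2, hY2, e1, e2]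
    simp only [dispW]
    push_cast
    ring
  · apply run_bound hY1 (2 * K) 1 K
    intro j hj
    rw [one_mul, hY2, hu2 j hj]
    simp only [dispW]

/-- The analogue of `parallel_one` for a 3iet word beginning with `(AAC)^K (AB)^K`. -/
lemma parallel_two {g : Morph} (hg : Preserves3iet g) :
    (2 * zer (g Letter.A) + zer (g Letter.C)) * (one (g Letter.A) + one (g Letter.B))
      = (2 * one (g Letter.A) + one (g Letter.C)) * (zer (g Letter.A) + zer (g Letter.B)) := by
  obtain ⟨K, hK⟩ := exists_gt ((2 * zer (g Letter.A) + zer (g Letter.C)) +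
    (2 * one (g Letter.A) + one (g Letter.C)) + (zer (g Letter.A) + zer (g Letter.B)) +
    (one (g Letter.A) + one (g Letter.B)))
  obtain ⟨u, hu, hu1, hu2⟩ := exists_word_two K (by omega)
  obtain ⟨a, c, ha, hc, -, Y, hY1, hY2⟩ := exists_heights hg hu
  refine parallel_of_bounds ha hc _ _ _ _ K hK ?_ ?_
  · apply run_bound hY1 0 3 K
    intro j hj
    obtain ⟨e1, e2, e3⟩ := hu1 j hj
    rw [zero_add, show 3 * j + 3 = 3 * j + 2 + 1 by ring, hY2, e3,
      show 3 * j + 2 = 3 * j + 1 + 1 by ring, hY2, hY2, e1, e2]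
    simp only [dispW]
    push_cast
    ring
  · apply run_bound hY1 (3 * K) 2 K
    intro j hj
    obtain ⟨e1, e2⟩ := hu2 j hj
    rw [show 3 * K + 2 * j + 2 = 3 * K + 2 * j + 1 + 1 by ring, hY2, hY2, e1, e2]
    simp only [dispW]
    push_cast
    ring

lemma zer_add_one_pos {l : List Letter} (h : l ≠ []) : 1 ≤ zer l + one l := by
  have h1 := List.length_pos_iff.mpr h
  rw [length_eq_counts] at h1
  unfold zer one
  omega

/-- The binary contents of the three letter images are not all parallel: otherwise the orbit
of the image word would drift in one direction. -/
lemma not_all_parallel {g : Morph} (hg : Preserves3iet g) :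
    ¬ ∀ x, zer (g x) * one (g Letter.A) = one (g x) * zer (g Letter.A) := by
  intro hpar
  obtain ⟨u, hu, -, -⟩ := exists_word_one 1 le_rfl
  obtain ⟨a, c, ha, hc, hind, Y, hY1, hY2⟩ := exists_heights hg hu
  set z := zer (g Letter.A) with hz
  set o := one (g Letter.A) with ho
  have hzo : 1 ≤ z + o := zer_add_one_pos (hg.1 Letter.A)
  set e := dispW a c (g Letter.A) with he
  have hene : e ≠ 0 := by
    intro h0
    rw [LinearIndependent.pair_iff] at hind
    obtain ⟨h1, h2⟩ := hind (-(o : ℚ)) (z : ℚ) (by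
      rw [he, dispW, ← hz, ← ho] at h0
      simp only [Rat.smul_def]
      push_cast
      linear_combination h0)
    have h1' : o = 0 := by exact_mod_cast neg_eq_zero.mp h1
    have h2' : z = 0 := by exact_mod_cast h2
    omega
  have hstep : ∀ x, ((z : ℝ) + o) * dispW a c (g x) = e * (zer (g x) + one (g x)) := by
    intro x
    have h1 : (zer (g x) : ℝ) * o = one (g x) * z := by exact_mod_cast hpar x
    rw [he]
    simp only [dispW, ← hz, ← ho]
    linear_combination (a + c) * h1
  have hgrow : ∀ n : ℕ, ∃ N : ℕ, n ≤ N ∧ ((z : ℝ) + o) * (Y n - Y 0) = e * N := by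
    intro n
    induction n with
    | zero => exact ⟨0, le_rfl, by simp⟩
    | succ n ih =>
      obtain ⟨N, hN1, hN2⟩ := ih
      refine ⟨N + (zer (g (u n)) + one (g (u n))), ?_, ?_⟩
      · have := zer_add_one_pos (hg.1 (u n))
        omega
      · rw [hY2]
        push_cast
        linear_combination hN2 + hstep (u n)
  have hepos : 0 < |e| := abs_pos.mpr hene
  obtain ⟨n, hn⟩ := exists_nat_gt (((z : ℝ) + o) * (a + c) / |e|)
  rw [div_lt_iff₀ hepos] at hn
  obtain ⟨N, hN1, hN2⟩ := hgrow n
  have h1 := congrArg abs hN2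
  have hzo0 : (0 : ℝ) ≤ z + o := by positivity
  rw [abs_mul, abs_mul, abs_of_nonneg hzo0, Nat.abs_cast] at h1
  have h2 : |Y n - Y 0| ≤ a + c := by
    have h3 := hY1 n
    have h4 := hY1 0
    rw [abs_le]
    constructor <;> linarith
  have h5 : ((z : ℝ) + o) * |Y n - Y 0| ≤ (z + o) * (a + c) := mul_le_mul_of_nonneg_left h2 hzo0
  have h6 : (n : ℝ) ≤ N := by exact_mod_cast hN1
  nlinarith

/-- If `(d₀, d₁)`, the content of `g B` minus those of `g A` and `g C`, were nonzero, then
`parallel_one` and `parallel_two` would make it parallel to the contents of `g A` and `g C`, and all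
three contents would be parallel, contrary to `not_all_parallel`. -/
lemma compat_of_preserves {g : Morph} (hg : Preserves3iet g) : Compat g := by
  have h1 := parallel_one hg
  have h2 := parallel_two hg
  have h3 := not_all_parallel hg
  have hA := zer_add_one_pos (hg.1 Letter.A)
  unfold Compat
  generalize hzA : zer (g Letter.A) = zA at *
  generalize hzB : zer (g Letter.B) = zB at *
  generalize hzC : zer (g Letter.C) = zC at *
  generalize hoA : one (g Letter.A) = oA at *
  generalize hoB : one (g Letter.B) = oB at *
  generalize hoC : one (g Letter.C) = oC at *
  by_contra hne
  apply h3
  zify at h1 h2 hne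
  obtain ⟨d₀, hd₀⟩ : ∃ d₀ : ℤ, d₀ = zB - zA - zC := ⟨_, rfl⟩
  obtain ⟨d₁, hd₁⟩ : ∃ d₁ : ℤ, d₁ = oB - oA - oC := ⟨_, rfl⟩
  have hB0 : (zB : ℤ) = zA + zC + d₀ := by omega
  have hB1 : (oB : ℤ) = oA + oC + d₁ := by omega
  have hd : d₀ ≠ 0 ∨ d₁ ≠ 0 := by
    by_contra h
    push Not at h
    exact hne ⟨by omega, by omega⟩
  rw [hB0, hB1] at h1 h2
  have pA : (zA : ℤ) * d₁ = oA * d₀ := by linear_combination h2 - h1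
  have pC : (zC : ℤ) * d₁ = oC * d₀ := by linear_combination 2 * h1 - h2
  have pAC : (zC : ℤ) * oA = oC * zA := by
    rcases hd with hd | hd
    · apply mul_left_cancel₀ hd
      linear_combination zA * pC - zC * pA
    · apply mul_left_cancel₀ hd
      linear_combination oA * pC - oC * pA
  intro x
  cases x
  · rw [hzA, hoA]; ring
  · rw [hzB, hoB]
    zify
    rw [hB0, hB1]
    linear_combination pAC - pA
  · rw [hzC, hoC]
    exact_mod_cast pAC

/-- The monoid Φ_3iet of 3iet preserving morphisms is not finitely generated:
there is no finite set S of 3iet preserving morphisms such that every 3iet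
preserving morphism is a composition of finitely many elements of S. -/
theorem Phi3iet_not_finitely_generated :
    ¬ ∃ S : Set Morph, S.Finite ∧ (∀ φ ∈ S, Preserves3iet φ) ∧
      ∀ φ : Morph, Preserves3iet φ →
        ∃ L : List Morph, (∀ ψ ∈ L, ψ ∈ S) ∧ φ = L.foldr compM idM := by
  rintro ⟨S, hfin, hS, hgen⟩
  obtain ⟨N, hN⟩ : ∃ N : ℕ, ∀ ψ ∈ S, ∀ a, (ψ a).length ≤ N := by
    obtain ⟨N, hN⟩ := (hfin.image fun ψ : Morph => (ψ Letter.A).length + (ψ Letter.B).length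
      + (ψ Letter.C).length).bddAbove
    refine ⟨N, fun ψ hψ a => ?_⟩
    have : (ψ Letter.A).length + (ψ Letter.B).length + (ψ Letter.C).length ≤ N :=
      hN ⟨ψ, hψ, rfl⟩
    cases a <;> omega
  obtain ⟨L, hL, hprod⟩ := hgen (theta (N + 1)) (theta_preserves (N + 1))
  obtain ⟨ψ, hψ, a, ha⟩ := long_factor (t := N + 1) (by omega) L
    (fun ψ hψ => ⟨(hS ψ (hL ψ hψ)).1, compat_of_preserves (hS ψ (hL ψ hψ))⟩) id
    (fun a => by rw [← hprod]; simp)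
  have := hN ψ (hL ψ hψ) a
  omega
end
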